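/- In the two-party binary DPF construction, for all choices of the expansion function G, the function Convert, the initial seeds s_0^{(0)}, s_1^{(0)}, the point α ∈ {0,1}^n and the payload β ∈ 𝔾, and for every input x ∈ {0,1}^n, the reconstructed output satisfies y_0(x) + y_1(x) = β if x = α, and y_0(x) + y_1(x) = 0 otherwise. -/

import Mathlib

/-!
Along the path to `α`, each party's evaluation state is its key-generation state
(`evalSt_eq_gen`), and the two control bits are complementary (`gen_control_bits`). When `x` first
deviates from `α`, exactly one party applies the correction word; since that word is the XOR of
the two expansions in the losing direction, both parties land in the same state (`evalStep_lose`). Equal states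
evolve identically from then on (`evalSt_false_eq_true`), so the outputs cancel. On the path
itself exactly one party adds the final correction word, whose sign is fixed by which party it is.
-/

namespace DPF

variable {lam : ℕ}

/-- One step of DPF key generation at a level with point-bit `a` (`a = true`
means `Keep = R`, `a = false` means `Keep = L`): given the current states
`(s₀, t₀, s₁, t₁)`, produce the new states together with the correction word
`(s_CW, t_CW^L, t_CW^R)` of this level. -/
def genStep (G : BitVec lam → BitVec lam × Bool × BitVec lam × Bool) (a : Bool)
    (st : BitVec lam × Bool × BitVec lam × Bool) :
    (BitVec lam × Bool × BitVec lam × Bool) × (BitVec lam × Bool × Bool) :=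
  let (s0, t0, s1, t1) := st
  let (s0L, t0L, s0R, t0R) := G s0
  let (s1L, t1L, s1R, t1R) := G s1
  -- Lose is the direction opposite to Keep
  let sCW : BitVec lam := if a then s0L ^^^ s1L else s0R ^^^ s1R
  let tCWL : Bool := (((t0L != t1L) != a) != true)
  let tCWR : Bool := ((t0R != t1R) != a)
  let s0keep := if a then s0R else s0L
  let s1keep := if a then s1R else s1L
  let t0keep := if a then t0R else t0L
  let t1keep := if a then t1R else t1L
  let tCWkeep := if a then tCWR else tCWL
  let s0' := s0keep ^^^ (if t0 then sCW else 0#lam)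
  let s1' := s1keep ^^^ (if t1 then sCW else 0#lam)
  let t0' := t0keep != (t0 && tCWkeep)
  let t1' := t1keep != (t1 && tCWkeep)
  ((s0', t0', s1', t1'), (sCW, tCWL, tCWR))

/-- Key-generation data after `l` levels for point `α` (1-indexed bits) and
initial seeds `s0init`, `s1init`: the first component is the state
`(s₀^{(l)}, t₀^{(l)}, s₁^{(l)}, t₁^{(l)})`, the second is the level-`l`
correction word `CW^{(l)} = (s_CW^{(l)}, t_CW^{L,(l)}, t_CW^{R,(l)})`
(a dummy value at level `0`). -/
def gen (G : BitVec lam → BitVec lam × Bool × BitVec lam × Bool)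
    (α : ℕ → Bool) (s0init s1init : BitVec lam) :
    ℕ → (BitVec lam × Bool × BitVec lam × Bool) × (BitVec lam × Bool × Bool)
  | 0 => ((s0init, false, s1init, true), (0#lam, false, false))
  | l + 1 => genStep G (α (l + 1)) (gen G α s0init s1init l).1

/-- The final correction word
`CW^{(n+1)} = (−1)^{t₁^{(n)}} · (β − Convert(s₀^{(n)}) + Convert(s₁^{(n)}))`. -/
def finalCW {Grp : Type*} [AddCommGroup Grp]
    (G : BitVec lam → BitVec lam × Bool × BitVec lam × Bool)
    (Convert : BitVec lam → Grp) (α : ℕ → Bool) (β : Grp)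
    (s0init s1init : BitVec lam) (n : ℕ) : Grp :=
  let st := (gen G α s0init s1init n).1
  let g := β - Convert st.1 + Convert st.2.2.1
  if st.2.2.2 then -g else g

/-- One evaluation step with correction word `cw` and input bit `xb`. -/
def evalStep (G : BitVec lam → BitVec lam × Bool × BitVec lam × Bool)
    (cw : BitVec lam × Bool × Bool) (xb : Bool) (st : BitVec lam × Bool) :
    BitVec lam × Bool :=
  let (σ, τ) := st
  let (σL, τL, σR, τR) := G σ
  let (sCW, tCWL, tCWR) := cw
  let σhatL := σL ^^^ (if τ then sCW else 0#lam)
  let σhatR := σR ^^^ (if τ then sCW else 0#lam)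
  let τhatL := τL != (τ && tCWL)
  let τhatR := τR != (τ && tCWR)
  if xb then (σhatR, τhatR) else (σhatL, τhatL)

/-- Evaluation state `(σ_b^{(l)}(x), τ_b^{(l)}(x))` of party `b`
(`b = false` is party 0, `b = true` is party 1) after `l` levels on input `x`
(1-indexed bits). -/
def evalSt (G : BitVec lam → BitVec lam × Bool × BitVec lam × Bool)
    (α : ℕ → Bool) (s0init s1init : BitVec lam) (b : Bool) (x : ℕ → Bool) :
    ℕ → BitVec lam × Bool
  | 0 => (if b then s1init else s0init, b)
  | l + 1 =>
      evalStep G (gen G α s0init s1init (l + 1)).2 (x (l + 1))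
        (evalSt G α s0init s1init b x l)

/-- The output of party `b` on input `x`:
`y_b(x) = (−1)^b · (Convert(σ_b^{(n)}(x)) + τ_b^{(n)}(x) • CW^{(n+1)})`. -/
def output {Grp : Type*} [AddCommGroup Grp]
    (G : BitVec lam → BitVec lam × Bool × BitVec lam × Bool)
    (Convert : BitVec lam → Grp) (α : ℕ → Bool) (β : Grp)
    (s0init s1init : BitVec lam) (n : ℕ) (b : Bool) (x : ℕ → Bool) : Grp :=
  let st := evalSt G α s0init s1init b x n
  let v := Convert st.1 + (if st.2 then finalCW G Convert α β s0init s1init n else 0)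
  if b then -v else v

end DPF

namespace DPF

variable {lam : ℕ}

/-- The bit correction words make the two control bits differ after every step that starts from
complementary control bits. -/
theorem genStep_control_bits (G : BitVec lam → BitVec lam × Bool × BitVec lam × Bool) (a : Bool)
    (st : BitVec lam × Bool × BitVec lam × Bool) (h : st.2.2.2 = !st.2.1) :
    (genStep G a st).1.2.2.2 = !(genStep G a st).1.2.1 := by
  obtain ⟨s0, t0, s1, t1⟩ := st
  dsimp only at h
  subst h
  rcases h0 : G s0 with ⟨s0L, t0L, s0R, t0R⟩
  rcases h1 : G s1 with ⟨s1L, t1L, s1R, t1R⟩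
  simp only [genStep, h0, h1]
  cases a <;> cases t0 <;> cases t0L <;> cases t1L <;> cases t0R <;> cases t1R <;> rfl

theorem gen_control_bits (G : BitVec lam → BitVec lam × Bool × BitVec lam × Bool)
    (α : ℕ → Bool) (s0init s1init : BitVec lam) (l : ℕ) :
    (gen G α s0init s1init l).1.2.2.2 = !(gen G α s0init s1init l).1.2.1 := by
  induction l with
  | zero => rfl
  | succ l ih => exact genStep_control_bits G _ _ ih

theorem evalStep_keep (G : BitVec lam → BitVec lam × Bool × BitVec lam × Bool) (a : Bool)
    (st : BitVec lam × Bool × BitVec lam × Bool) :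
    evalStep G (genStep G a st).2 a (st.1, st.2.1) =
        ((genStep G a st).1.1, (genStep G a st).1.2.1) ∧
      evalStep G (genStep G a st).2 a st.2.2 = (genStep G a st).1.2.2 := by
  cases a <;> exact ⟨rfl, rfl⟩

/-- Stepping off the path from complementary control bits brings both parties to the same
state. -/
theorem evalStep_lose (G : BitVec lam → BitVec lam × Bool × BitVec lam × Bool) (a : Bool)
    (st : BitVec lam × Bool × BitVec lam × Bool) (h : st.2.2.2 = !st.2.1) :
    evalStep G (genStep G a st).2 (!a) (st.1, st.2.1) =
      evalStep G (genStep G a st).2 (!a) st.2.2 := by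
  obtain ⟨s0, t0, s1, t1⟩ := st
  dsimp only at h
  subst h
  rcases h0 : G s0 with ⟨s0L, t0L, s0R, t0R⟩
  rcases h1 : G s1 with ⟨s1L, t1L, s1R, t1R⟩
  simp only [genStep, evalStep, h0, h1]
  have hx (u v : BitVec lam) : u ^^^ (u ^^^ v) = v := by
    rw [← BitVec.xor_assoc, BitVec.xor_self, BitVec.zero_xor]
  have hy (u v : BitVec lam) : v ^^^ (u ^^^ v) = u := by
    rw [BitVec.xor_comm u v, hx]
  have hb (u v : Bool) : (v != (u != v)) = u := by cases u <;> cases v <;> rfl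
  cases a <;> cases t0 <;> simp [hx, hy, hb]

theorem evalSt_eq_gen (G : BitVec lam → BitVec lam × Bool × BitVec lam × Bool)
    (α : ℕ → Bool) (s0init s1init : BitVec lam) (x : ℕ → Bool) (l : ℕ)
    (h : ∀ j, 1 ≤ j → j ≤ l → x j = α j) :
    evalSt G α s0init s1init false x l =
        ((gen G α s0init s1init l).1.1, (gen G α s0init s1init l).1.2.1) ∧
      evalSt G α s0init s1init true x l = (gen G α s0init s1init l).1.2.2 := by
  induction l with
  | zero => exact ⟨rfl, rfl⟩
  | succ l ih =>
    obtain ⟨e0, e1⟩ := ih fun j h1 h2 => h j h1 (by omega)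
    have hk := evalStep_keep G (α (l + 1)) (gen G α s0init s1init l).1
    simp only [evalSt, gen, e0, e1, h (l + 1) (by omega) le_rfl]
    exact hk

theorem evalSt_false_eq_true (G : BitVec lam → BitVec lam × Bool × BitVec lam × Bool)
    (α : ℕ → Bool) (s0init s1init : BitVec lam) (x : ℕ → Bool) (l : ℕ)
    (h : ¬ ∀ j, 1 ≤ j → j ≤ l → x j = α j) :
    evalSt G α s0init s1init false x l = evalSt G α s0init s1init true x l := by
  induction l with
  | zero => exact absurd (fun j h1 h2 => by omega) h
  | succ l ih =>
    by_cases hl : ∀ j, 1 ≤ j → j ≤ l → x j = α j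
    · -- The first `l` bits agree, so level `l + 1` is where `x` leaves the path.
      have hne : x (l + 1) ≠ α (l + 1) := fun he => h fun j h1 h2 => by
        rcases Nat.lt_or_eq_of_le h2 with h3 | h3
        · exact hl j h1 (by omega)
        · rw [h3, he]
      have hx : x (l + 1) = !α (l + 1) := by
        revert hne
        cases x (l + 1) <;> cases α (l + 1) <;> simp
      obtain ⟨e0, e1⟩ := evalSt_eq_gen G α s0init s1init x l hl
      simp only [evalSt, gen, e0, e1, hx]
      exact evalStep_lose G _ _ (gen_control_bits G α s0init s1init l)
    · simp only [evalSt, ih hl]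

end DPF

/-- Correctness of the two-party binary DPF construction: for every choice of
the expansion function `G`, the function `Convert`, the initial seeds, the
point `α ∈ {0,1}^n` and the payload `β`, and every input `x ∈ {0,1}^n`, the
reconstructed output satisfies `y₀(x) + y₁(x) = β` if `x = α` (the first `n`
bits agree) and `y₀(x) + y₁(x) = 0` otherwise. -/
theorem dpf_correctness {lam n : ℕ} {Grp : Type*} [AddCommGroup Grp]
    (G : BitVec lam → BitVec lam × Bool × BitVec lam × Bool)
    (Convert : BitVec lam → Grp) (α : ℕ → Bool) (β : Grp)
    (s0init s1init : BitVec lam) (x : ℕ → Bool) :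
    ((∀ j, 1 ≤ j → j ≤ n → x j = α j) →
      DPF.output G Convert α β s0init s1init n false x +
        DPF.output G Convert α β s0init s1init n true x = β) ∧
    ((¬ ∀ j, 1 ≤ j → j ≤ n → x j = α j) →
      DPF.output G Convert α β s0init s1init n false x +
        DPF.output G Convert α β s0init s1init n true x = 0) := by
  constructor
  · intro h
    obtain ⟨e0, e1⟩ := DPF.evalSt_eq_gen G α s0init s1init x n h
    have ht := DPF.gen_control_bits G α s0init s1init n
    simp only [DPF.output, DPF.finalCW, e0, e1, ht]
    cases (DPF.gen G α s0init s1init n).1.2.1 <;> simp <;> abel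
  · intro h
    simp [DPF.output, DPF.evalSt_false_eq_true G α s0init s1init x n h]
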